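/- arXiv:1601.02915 — 2 statements merged into one kernel-verified Lean document; each statement's English description precedes it below -/
import Mathlib

section
/- The correspondences between stochastic valuations and probability assignments are mutually inverse: for every stochastic valuation μ, the unique stochastic valuation μ^{P_μ} induced by the probability assignment P_μ equals μ; and for every probability assignment P, the probability assignment P_{μ^P} induced by the stochastic valuation μ^P equals P, i.e., μ^P{v : v ⊨ β} = P(β) for every propositional formula β. -/
open MeasureTheory

/-- Propositional formulas over atoms `B_j`, `j : ℕ`, with `¬` and `→`. -/
inductive PropForm : Type
  | atom : ℕ → PropForm
  | neg : PropForm → PropForm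
  | imp : PropForm → PropForm → PropForm
  deriving DecidableEq

namespace PropForm

def conj (α β : PropForm) : PropForm := neg (imp α (neg β))
def disj (α β : PropForm) : PropForm := imp (neg α) β
def biimp (α β : PropForm) : PropForm := conj (imp α β) (imp β α)
def top : PropForm := imp (atom 0) (atom 0)
def bot : PropForm := neg top

/-- Satisfaction of a formula by a valuation `v : ℕ → Bool` (a subset of ℕ). -/
def sat (v : ℕ → Bool) : PropForm → Prop
  | atom j => v j = true
  | neg α => ¬ sat v α
  | imp α β => sat v α → sat v β

/-- The finite set `B_α` of indices of atoms occurring in `α`. -/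
def atoms : PropForm → Finset ℕ
  | atom j => {j}
  | neg α => atoms α
  | imp α β => atoms α ∪ atoms β

end PropForm

/-- `⊨ α`: every valuation satisfies `α`. -/
def Valid (α : PropForm) : Prop := ∀ v, PropForm.sat v α

/-- `α ⊨ β`. -/
def Entails (α β : PropForm) : Prop := ∀ v, PropForm.sat v α → PropForm.sat v β

/-- `Δ ⊨ α`. -/
def SetEntails (Δ : Set PropForm) (α : PropForm) : Prop :=
  ∀ v, (∀ δ ∈ Δ, PropForm.sat v δ) → PropForm.sat v α

/-- Conjunction of a list of formulas (empty conjunction is `⊤`). -/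
def bigConj (l : List PropForm) : PropForm := l.foldr PropForm.conj PropForm.top

/-- Disjunction of a list of formulas (empty disjunction is `⊥`). -/
def bigDisj (l : List PropForm) : PropForm := l.foldr PropForm.disj PropForm.bot

/-- `φ_A^U = (⋀_{j∈U} B_j) ∧ (⋀_{j∈A∖U} ¬B_j)`. -/
def phi (A U : Finset ℕ) : PropForm :=
  PropForm.conj (bigConj ((U.sort (· ≤ ·)).map PropForm.atom))
    (bigConj (((A \ U).sort (· ≤ ·)).map (fun j => PropForm.neg (PropForm.atom j))))

/-- The space of valuations, `2^ℕ` identified with `{0,1}^ℕ`, with the product σ-algebra. -/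
abbrev Val := ℕ → Bool

/-- `v ∩ A` for a valuation `v` and a finite `A ⊆ ℕ`. -/
def restrict (v : Val) (A : Finset ℕ) : Finset ℕ := A.filter (fun j => v j = true)

/-- `Prob_μ(α) = μ{v : v ⊨ α}`. -/
noncomputable def Prob (μ : Measure Val) (α : PropForm) : ℝ :=
  (μ {v | PropForm.sat v α}).toReal

/-- Adams' probability assignment: P1–P4. -/
structure IsProbAssignment (P : PropForm → ℝ) : Prop where
  nonneg : ∀ α, 0 ≤ P α
  le_one : ∀ α, P α ≤ 1
  valid_one : ∀ α, Valid α → P α = 1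
  mono : ∀ α β, Entails α β → P α ≤ P β
  additive : ∀ α β, Valid (PropForm.neg (PropForm.conj β α)) →
      P (PropForm.disj β α) = P β + P α

theorem sat_conj (v : Val) (α β : PropForm) :
    PropForm.sat v (PropForm.conj α β) ↔ PropForm.sat v α ∧ PropForm.sat v β := by
  simp only [PropForm.conj, PropForm.sat]; tauto

theorem sat_disj (v : Val) (α β : PropForm) :
    PropForm.sat v (PropForm.disj α β) ↔ PropForm.sat v α ∨ PropForm.sat v β := by
  simp only [PropForm.disj, PropForm.sat]; tauto

theorem sat_top (v : Val) : PropForm.sat v PropForm.top := by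
  simp [PropForm.top, PropForm.sat]

theorem sat_bot (v : Val) : ¬ PropForm.sat v PropForm.bot := by
  simp [PropForm.bot, PropForm.top, PropForm.sat]

theorem sat_bigConj (v : Val) (l : List PropForm) :
    PropForm.sat v (bigConj l) ↔ ∀ a ∈ l, PropForm.sat v a := by
  induction l with
  | nil => simp [bigConj, sat_top]
  | cons a l ih =>
    have : bigConj (a :: l) = PropForm.conj a (bigConj l) := rfl
    rw [this, sat_conj, ih]; simp

theorem sat_bigDisj (v : Val) (l : List PropForm) :
    PropForm.sat v (bigDisj l) ↔ ∃ a ∈ l, PropForm.sat v a := by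
  induction l with
  | nil => simp [bigDisj, sat_bot]
  | cons a l ih =>
    have : bigDisj (a :: l) = PropForm.disj a (bigDisj l) := rfl
    rw [this, sat_disj, ih]; simp

theorem sat_phi (v : Val) (A U : Finset ℕ) (h : U ⊆ A) :
    PropForm.sat v (phi A U) ↔ restrict v A = U := by
  rw [phi, sat_conj, sat_bigConj, sat_bigConj]
  simp only [List.mem_map, Finset.mem_sort, forall_exists_index, and_imp,
    forall_apply_eq_imp_iff₂, PropForm.sat, Finset.mem_sdiff, restrict, Finset.ext_iff,
    Finset.mem_filter]
  constructor
  · rintro ⟨h1, h2⟩ j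
    constructor
    · rintro ⟨hj, hv⟩
      by_contra hn
      exact h2 _ j hj hn rfl hv
    · intro hj
      exact ⟨h hj, h1 j hj⟩
  · intro hh
    refine ⟨fun j hj => ((hh j).2 hj).2, ?_⟩
    rintro _ j hj hn rfl hv
    exact hn ((hh j).1 ⟨hj, hv⟩)

theorem sat_congr (v w : Val) (β : PropForm) (h : ∀ j ∈ β.atoms, v j = w j) :
    PropForm.sat v β ↔ PropForm.sat w β := by
  induction β with
  | atom j => simp [PropForm.sat, h j (by simp [PropForm.atoms])]
  | neg α ih => simp only [PropForm.sat]; rw [ih h]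
  | imp α β iha ihb =>
    simp only [PropForm.sat]
    rw [iha fun j hj => h j (by simp [PropForm.atoms, hj]),
      ihb fun j hj => h j (by simp [PropForm.atoms, hj])]

theorem assignment_congr {P : PropForm → ℝ} (hP : IsProbAssignment P) {α β : PropForm}
    (h : ∀ v, PropForm.sat v α ↔ PropForm.sat v β) : P α = P β :=
  le_antisymm (hP.mono _ _ fun v => (h v).1) (hP.mono _ _ fun v => (h v).2)

theorem assignment_bot {P : PropForm → ℝ} (hP : IsProbAssignment P) :
    P PropForm.bot = 0 := by
  have h := hP.additive PropForm.bot PropForm.bot (fun v => by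
    show ¬ PropForm.sat v _
    rw [sat_conj]; exact fun h => sat_bot v h.1)
  have h2 : P (PropForm.disj PropForm.bot PropForm.bot) = P PropForm.bot :=
    assignment_congr hP fun v => by rw [sat_disj]; simp
  linarith

theorem assignment_bigDisj {P : PropForm → ℝ} (hP : IsProbAssignment P) (A : Finset ℕ)
    (l : List (Finset ℕ)) (hl : l.Nodup) (hA : ∀ U ∈ l, U ⊆ A) :
    P (bigDisj (l.map (phi A))) = (l.map fun U => P (phi A U)).sum := by
  induction l with
  | nil => simpa [bigDisj] using assignment_bot hP
  | cons U l ih =>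
    have e : bigDisj ((U :: l).map (phi A)) =
      PropForm.disj (phi A U) (bigDisj (l.map (phi A))) := rfl
    rw [List.nodup_cons] at hl
    rw [e, hP.additive, ih hl.2 fun V hV => hA V (List.mem_cons_of_mem _ hV)]
    · simp
    · intro v
      show ¬ PropForm.sat v _
      rw [sat_conj, sat_bigDisj, sat_phi _ _ _ (hA U List.mem_cons_self)]
      rintro ⟨h1, a, ha, hs⟩
      obtain ⟨V, hV, rfl⟩ := List.mem_map.1 ha
      rw [sat_phi _ _ _ (hA V (List.mem_cons_of_mem _ hV)), h1] at hs
      exact hl.1 (hs ▸ hV)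

open Classical in
theorem assignment_ext {P Q : PropForm → ℝ} (hP : IsProbAssignment P)
    (hQ : IsProbAssignment Q)
    (h : ∀ A : Finset ℕ, A.Nonempty → ∀ U ⊆ A, P (phi A U) = Q (phi A U)) (β : PropForm) :
    P β = Q β := by
  set A : Finset ℕ := insert 0 β.atoms with hAdef
  set S : Finset (Finset ℕ) :=
    A.powerset.filter fun U => PropForm.sat (fun j => decide (j ∈ U)) β with hS
  have hSA : ∀ U ∈ S.toList, U ⊆ A := fun U hU => by
    rw [Finset.mem_toList, hS, Finset.mem_filter, Finset.mem_powerset] at hU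
    exact hU.1
  have key : ∀ v, PropForm.sat v β ↔ PropForm.sat v (bigDisj (S.toList.map (phi A))) := by
    intro v
    have hr : PropForm.sat (fun j => decide (j ∈ restrict v A)) β ↔ PropForm.sat v β := by
      apply sat_congr
      intro j hj
      have : j ∈ A := Finset.mem_insert_of_mem hj
      simp [restrict, this]
    have hrA : restrict v A ⊆ A := Finset.filter_subset _ _
    rw [sat_bigDisj]
    constructor
    · intro hv
      refine ⟨phi A (restrict v A), List.mem_map.2 ⟨_, ?_, rfl⟩, (sat_phi _ _ _ hrA).2 rfl⟩
      rw [Finset.mem_toList, hS, Finset.mem_filter, Finset.mem_powerset]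
      exact ⟨hrA, hr.2 hv⟩
    · rintro ⟨a, ha, hs⟩
      obtain ⟨V, hV, rfl⟩ := List.mem_map.1 ha
      rw [sat_phi _ _ _ (hSA V hV)] at hs
      rw [Finset.mem_toList, hS, Finset.mem_filter] at hV
      rw [← hr, hs]
      exact hV.2
  rw [assignment_congr hP key, assignment_congr hQ key,
    assignment_bigDisj hP A _ S.nodup_toList hSA, assignment_bigDisj hQ A _ S.nodup_toList hSA]
  congr 1
  apply List.map_congr_left
  intro U hU
  exact h A (Finset.insert_nonempty _ _) U (hSA U hU)

theorem measurableSet_sat (β : PropForm) : MeasurableSet {v : Val | PropForm.sat v β} := by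
  induction β with
  | atom j =>
    exact (measurable_pi_apply (X := fun _ : ℕ => Bool) j) (measurableSet_singleton true)
  | neg α ih => exact ih.compl
  | imp α β iha ihb => exact iha.imp ihb

theorem isProbAssignment_Prob (μ : Measure Val) [IsProbabilityMeasure μ] :
    IsProbAssignment (Prob μ) where
  nonneg α := ENNReal.toReal_nonneg
  le_one α := measureReal_le_one
  valid_one α h := by
    have : {v | PropForm.sat v α} = Set.univ := Set.eq_univ_of_forall h
    simp [Prob, this]
  mono α β h := measureReal_mono (μ := μ) h
  additive α β h := by
    have e : {v | PropForm.sat v (PropForm.disj β α)} =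
        {v | PropForm.sat v β} ∪ {v | PropForm.sat v α} := by
      ext v; exact sat_disj v β α
    have d : Disjoint {v | PropForm.sat v β} {v | PropForm.sat v α} := by
      rw [Set.disjoint_left]
      intro v h1 h2
      exact h v ((sat_conj v β α).2 ⟨h1, h2⟩)
    simp only [Prob]
    rw [e]
    exact measureReal_union d (measurableSet_sat α)

theorem prob_phi (μ : Measure Val) (A U : Finset ℕ) (h : U ⊆ A) :
    Prob μ (phi A U) = (μ {v | restrict v A = U}).toReal := by
  simp only [Prob, sat_phi _ A U h]

theorem generateFrom_sat : (inferInstance : MeasurableSpace Val) =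
    MeasurableSpace.generateFrom (Set.range fun β : PropForm => {v : Val | PropForm.sat v β}) := by
  apply le_antisymm
  · refine iSup_le fun j => ?_
    rw [← measurable_iff_comap_le]
    refine measurable_to_bool ?_
    exact MeasurableSpace.measurableSet_generateFrom ⟨PropForm.atom j, rfl⟩
  · apply MeasurableSpace.generateFrom_le
    rintro _ ⟨β, rfl⟩
    exact measurableSet_sat β

/-- the correspondences between stochastic valuations and probability
assignments are mutually inverse. First part: any probability measure `ν` whose cylinder
probabilities are given by the probability assignment `P_μ` of `μ` equals `μ`
(i.e. `μ^{P_μ} = μ`). Second part: for a probability assignment `P`, the measure `μ^P`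
(characterized by its cylinder probabilities) induces back `P`:
`μ^P{v : v ⊨ β} = P(β)` for every formula `β`. -/
theorem stochastic_probAssignment_galois :
    (∀ μ ν : MeasureTheory.Measure Val, IsProbabilityMeasure μ → IsProbabilityMeasure ν →
      (∀ A : Finset ℕ, A.Nonempty → ∀ U ⊆ A,
        (ν {v | restrict v A = U}).toReal = Prob μ (phi A U)) →
      ν = μ) ∧
    (∀ P : PropForm → ℝ, IsProbAssignment P →
      ∀ μ : MeasureTheory.Measure Val, IsProbabilityMeasure μ →
      (∀ A : Finset ℕ, A.Nonempty → ∀ U ⊆ A,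
        (μ {v | restrict v A = U}).toReal = P (phi A U)) →
      ∀ β : PropForm, Prob μ β = P β) := by
  constructor
  · intro μ ν hμ hν h
    have H : ∀ β, Prob ν β = Prob μ β :=
      assignment_ext (isProbAssignment_Prob ν) (isProbAssignment_Prob μ)
        fun A hA U hU => by rw [prob_phi ν A U hU, h A hA U hU]
    refine MeasureTheory.ext_of_generate_finite _ generateFrom_sat ?_ ?_ (by simp)
    · rintro _ ⟨α, rfl⟩ _ ⟨β, rfl⟩ _
      exact ⟨PropForm.conj α β, by ext v; exact sat_conj v α β⟩
    · rintro _ ⟨β, rfl⟩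
      exact (ENNReal.toReal_eq_toReal_iff' (measure_ne_top _ _) (measure_ne_top _ _)).1 (H β)
  · intro P hP μ hμ h
    exact assignment_ext (isProbAssignment_Prob μ) hP
      fun A hA U hU => by rw [prob_phi μ A U hU, h A hA U hU]
end

section
/- Let Δ ∪ {α} be a set of propositional formulas. If Δ ⊢_c α (α is derivable from Δ in the classical propositional Hilbert calculus whose axioms are all tautologies and whose only rule is modus ponens), then Δ* ⊢ α* in the PPL calculus, where β* denotes the PPL formula ⟦β⟧ = 1 and Δ* = {δ* : δ ∈ Δ}. -/
open MeasureTheory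

/-! ## PPL: probabilistic propositional logic -/

/-- RCOF variables: `x_k` for `k ∈ ℕ` and `x_α` for propositional formulas `α`. -/
inductive RVar : Type
  | num : ℕ → RVar
  | fm : PropForm → RVar
  deriving DecidableEq

/-- RCOF terms: built from 0, 1, variables, unary `-`, binary `+` and `×`. -/
inductive RTerm : Type
  | zero : RTerm
  | one : RTerm
  | var : RVar → RTerm
  | neg : RTerm → RTerm
  | add : RTerm → RTerm → RTerm
  | mul : RTerm → RTerm → RTerm
  deriving DecidableEq

/-- Value of a term in `ℝ` under an assignment. -/
def RTerm.eval (ρ : RVar → ℝ) : RTerm → ℝ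
  | zero => 0
  | one => 1
  | var x => ρ x
  | neg t => - t.eval ρ
  | add t s => t.eval ρ + s.eval ρ
  | mul t s => t.eval ρ * s.eval ρ

/-- PPL formulas: atoms `⟦α⟧ = t` and `⟦α⟧ < t`, closed under implication. -/
inductive PPLForm : Type
  | eq : PropForm → RTerm → PPLForm
  | lt : PropForm → RTerm → PPLForm
  | imp : PPLForm → PPLForm → PPLForm
  deriving DecidableEq

/-- `⊥` in PPL: `⟦⊤⟧ < 1`. -/
def pbot : PPLForm := PPLForm.lt PropForm.top RTerm.one

/-- `¬φ` in PPL: `φ → (⟦⊤⟧ < 1)`. -/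
def pneg (φ : PPLForm) : PPLForm := PPLForm.imp φ pbot

/-- `φ ∧ ψ` in PPL. -/
def pconj (φ ψ : PPLForm) : PPLForm := pneg (PPLForm.imp φ (pneg ψ))

/-- `φ ∨ ψ` in PPL. -/
def pdisj (φ ψ : PPLForm) : PPLForm := PPLForm.imp (pneg φ) ψ

/-- `φ ↔ ψ` in PPL. -/
def piff (φ ψ : PPLForm) : PPLForm := pconj (PPLForm.imp φ ψ) (PPLForm.imp ψ φ)

/-- Conjunction of a nonempty list of PPL formulas (empty list gives `⟦⊤⟧ = 1`). -/
def pBigConj : List PPLForm → PPLForm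
  | [] => PPLForm.eq PropForm.top RTerm.one
  | [φ] => φ
  | φ :: l => pconj φ (pBigConj l)

/-- Disjunction of a nonempty list of PPL formulas (empty list gives `⊥`). -/
def pBigDisj : List PPLForm → PPLForm
  | [] => pbot
  | [φ] => φ
  | φ :: l => pdisj φ (pBigDisj l)

/-- Satisfaction of a PPL formula by a stochastic valuation `μ` and an assignment `ρ`. -/
def PPLForm.sat (μ : MeasureTheory.Measure Val) (ρ : RVar → ℝ) : PPLForm → Prop
  | eq α t => Prob μ α = t.eval ρ
  | lt α t => Prob μ α < t.eval ρ
  | imp φ ψ => φ.sat μ ρ → ψ.sat μ ρ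

/-- `Γ ⊨ φ` in PPL. -/
def PPLentails (Γ : Set PPLForm) (φ : PPLForm) : Prop :=
  ∀ μ : MeasureTheory.Measure Val, MeasureTheory.IsProbabilityMeasure μ →
    ∀ ρ : RVar → ℝ, (∀ γ ∈ Γ, PPLForm.sat μ ρ γ) → PPLForm.sat μ ρ φ

/-- Boolean evaluation of a PPL formula given truth values for its atomic subformulas. -/
def PPLForm.evalAtoms (w : PPLForm → Bool) : PPLForm → Bool
  | imp φ ψ => !(φ.evalAtoms w) || ψ.evalAtoms w
  | φ => w φ

/-- Tautological PPL formulas: true under every assignment of truth values to atomic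
PPL formulas; these are exactly the PPL-substitution-instances of classical tautologies. -/
def PPLTaut (φ : PPLForm) : Prop := ∀ w : PPLForm → Bool, φ.evalAtoms w = true

/-- Literals of classical propositional logic. -/
def IsLiteral (α : PropForm) : Prop :=
  (∃ j, α = PropForm.atom j) ∨ (∃ j, α = PropForm.neg (PropForm.atom j))

/-- Conjunctions of literals. -/
inductive IsLitConj : PropForm → Prop
  | lit {α} : IsLiteral α → IsLitConj α
  | conj {α β} : IsLitConj α → IsLitConj β → IsLitConj (PropForm.conj α β)

/-- `B_Λ`, the union of the atom sets of the formulas `α j`. -/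
def BigB {k : ℕ} (α : Fin k → PropForm) : Finset ℕ :=
  Finset.univ.sup fun j => (α j).atoms

/-- `Λ = {c j ℓ}` is an adequate set of DNF-conjuncts for `{α j}`. -/
structure AdequateDNF {k : ℕ} (α : Fin k → PropForm) (m : Fin k → ℕ)
    (c : (j : Fin k) → Fin (m j) → PropForm) : Prop where
  atoms_eq : ∀ j ℓ, (c j ℓ).atoms = BigB α
  litconj : ∀ j ℓ, IsLitConj (c j ℓ)
  pairwise_incons : ∀ j, ∀ ℓ ℓ' : Fin (m j), ℓ ≠ ℓ' →
      Valid (PropForm.neg (PropForm.conj (c j ℓ) (c j ℓ')))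
  equiv : ∀ j, Valid (PropForm.biimp (α j) (bigDisj (List.ofFn (c j))))

/-- The RCOF formula `Q^{α_1,…,α_k}_Λ` holding in `ℝ` under the assignment `ρ`. -/
def Qcond {k : ℕ} (α : Fin k → PropForm) (m : Fin k → ℕ)
    (c : (j : Fin k) → Fin (m j) → PropForm) (ρ : RVar → ℝ) : Prop :=
  (∀ U ∈ (BigB α).powerset,
      0 ≤ ρ (RVar.fm (phi (BigB α) U)) ∧ ρ (RVar.fm (phi (BigB α) U)) ≤ 1) ∧
  (∑ U ∈ (BigB α).powerset, ρ (RVar.fm (phi (BigB α) U))) = 1 ∧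
  (∀ j, ρ (RVar.fm (α j)) = ∑ ℓ : Fin (m j), ρ (RVar.fm (c j ℓ)))

/-- `x ∘ y` where `∘` is `=` if `b` and `<` otherwise. -/
def rcmp (b : Bool) (x y : ℝ) : Prop := if b then x = y else x < y

/-- The PPL atom `⟦α⟧ ∘ t` where `∘` is `=` if `b` and `<` otherwise. -/
def patom (b : Bool) (α : PropForm) (t : RTerm) : PPLForm :=
  if b then PPLForm.eq α t else PPLForm.lt α t

/-- Side condition of the RR axioms: there is an adequate set of DNF-conjuncts for
`{α_1,…,α_{k+1}}` such that the universal closure of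
`(Q ∧ ⋀_{j≤k} x_{α_j} ∘_j t_j) → x_{α_{k+1}} ∘_{k+1} t_{k+1}` holds in `ℝ`. -/
def RRside {k : ℕ} (α : Fin (k + 1) → PropForm) (isEq : Fin (k + 1) → Bool)
    (t : Fin (k + 1) → RTerm) : Prop :=
  ∃ (m : Fin (k + 1) → ℕ) (c : (j : Fin (k + 1)) → Fin (m j) → PropForm),
    AdequateDNF α m c ∧
    ∀ ρ : RVar → ℝ, Qcond α m c ρ →
      (∀ j : Fin k, rcmp (isEq j.castSucc) (ρ (RVar.fm (α j.castSucc)))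
          ((t j.castSucc).eval ρ)) →
      rcmp (isEq (Fin.last k)) (ρ (RVar.fm (α (Fin.last k)))) ((t (Fin.last k)).eval ρ)

/-- The RR axiom `(⟦α_1⟧ ∘_1 t_1 ∧ … ∧ ⟦α_k⟧ ∘_k t_k) → ⟦α_{k+1}⟧ ∘_{k+1} t_{k+1}`
(for `k = 0` it is just the conclusion). -/
def rrFormula {k : ℕ} (α : Fin (k + 1) → PropForm) (isEq : Fin (k + 1) → Bool)
    (t : Fin (k + 1) → RTerm) : PPLForm :=
  match k with
  | 0 => patom (isEq (Fin.last 0)) (α (Fin.last 0)) (t (Fin.last 0))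
  | k + 1 => PPLForm.imp
      (pBigConj (List.ofFn fun j : Fin (k + 1) =>
        patom (isEq j.castSucc) (α j.castSucc) (t j.castSucc)))
      (patom (isEq (Fin.last (k + 1))) (α (Fin.last (k + 1))) (t (Fin.last (k + 1))))

/-- The PPL calculus: hypotheses, TAUT, RR and modus ponens. -/
inductive PPLderiv (Γ : Set PPLForm) : PPLForm → Prop
  | hyp {φ} : φ ∈ Γ → PPLderiv Γ φ
  | taut {φ} : PPLTaut φ → PPLderiv Γ φ
  | rr {k : ℕ} (α : Fin (k + 1) → PropForm) (isEq : Fin (k + 1) → Bool)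
      (t : Fin (k + 1) → RTerm) :
      RRside α isEq t → PPLderiv Γ (rrFormula α isEq t)
  | mp {φ ψ} : PPLderiv Γ (PPLForm.imp φ ψ) → PPLderiv Γ φ → PPLderiv Γ ψ

/-- The classical propositional Hilbert calculus whose axioms are all tautologies and
whose only rule is modus ponens. -/
inductive CPLderiv (Δ : Set PropForm) : PropForm → Prop
  | hyp {α} : α ∈ Δ → CPLderiv Δ α
  | taut {α} : Valid α → CPLderiv Δ α
  | mp {α β} : CPLderiv Δ (PropForm.imp α β) → CPLderiv Δ α → CPLderiv Δ β

/-- The translation `β* = (⟦β⟧ = 1)` of classical formulas into PPL. -/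
def star (β : PropForm) : PPLForm := PPLForm.eq β RTerm.one

/-! ## Helper material -/

theorem sat_congr_atoms (v w : ℕ → Bool) (α : PropForm) (h : ∀ j ∈ α.atoms, v j = w j) :
    PropForm.sat v α ↔ PropForm.sat w α := by
  induction α with
  | atom j => simp [PropForm.sat, h j (by simp [PropForm.atoms])]
  | neg α ih => simp only [PropForm.sat]; rw [ih (by simpa [PropForm.atoms] using h)]
  | imp α β iha ihb =>
    simp only [PropForm.atoms, Finset.mem_union] at h
    simp only [PropForm.sat]
    rw [iha (fun j hj => h j (Or.inl hj)), ihb (fun j hj => h j (Or.inr hj))]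

theorem sat_conj_iff (v : ℕ → Bool) (α β : PropForm) :
    PropForm.sat v (PropForm.conj α β) ↔ PropForm.sat v α ∧ PropForm.sat v β := by
  simp only [PropForm.conj, PropForm.sat]; tauto

theorem sat_top_iff (v : ℕ → Bool) : PropForm.sat v PropForm.top ↔ True := by
  simp [PropForm.top, PropForm.sat]

theorem sat_bigConj_iff (v : ℕ → Bool) (l : List PropForm) :
    PropForm.sat v (bigConj l) ↔ ∀ γ ∈ l, PropForm.sat v γ := by
  induction l with
  | nil => simp [bigConj, sat_top_iff]
  | cons a l ih =>
    have : bigConj (a :: l) = PropForm.conj a (bigConj l) := rfl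
    rw [this, sat_conj_iff, ih]; simp

theorem sat_bigDisj_iff (v : ℕ → Bool) (l : List PropForm) :
    PropForm.sat v (bigDisj l) ↔ ∃ γ ∈ l, PropForm.sat v γ := by
  induction l with
  | nil => simp [bigDisj, PropForm.bot, PropForm.sat, sat_top_iff]
  | cons a l ih =>
    have : bigDisj (a :: l) = PropForm.disj a (bigDisj l) := rfl
    rw [this]
    simp only [PropForm.disj, PropForm.sat, ih, List.mem_cons, exists_eq_or_imp]
    tauto

/-- The valuation given by a finite set. -/
def valOf (U : Finset ℕ) : ℕ → Bool := fun j => decide (j ∈ U)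

/-- The literal on atom `a` that is satisfied by `v`. -/
def litOf (v : ℕ → Bool) (a : ℕ) : PropForm :=
  if v a = true then PropForm.atom a else PropForm.neg (PropForm.atom a)

/-- The conjunction of literals over a (nonempty) list describing `v`. -/
def litConjOf (v : ℕ → Bool) : List ℕ → PropForm
  | [] => PropForm.top
  | [a] => litOf v a
  | a :: b :: l => PropForm.conj (litOf v a) (litConjOf v (b :: l))

theorem sat_litOf (w v : ℕ → Bool) (a : ℕ) : PropForm.sat w (litOf v a) ↔ w a = v a := by
  unfold litOf
  split_ifs with h
  · simp [PropForm.sat, h]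
  · simp [PropForm.sat, h]

theorem atoms_litOf (v : ℕ → Bool) (a : ℕ) : (litOf v a).atoms = {a} := by
  unfold litOf; split_ifs <;> rfl

theorem isLiteral_litOf (v : ℕ → Bool) (a : ℕ) : IsLiteral (litOf v a) := by
  unfold litOf; split_ifs
  · exact Or.inl ⟨a, rfl⟩
  · exact Or.inr ⟨a, rfl⟩

theorem sat_litConjOf (w v : ℕ → Bool) (l : List ℕ) :
    PropForm.sat w (litConjOf v l) ↔ ∀ a ∈ l, w a = v a := by
  induction l with
  | nil => simp [litConjOf, sat_top_iff]
  | cons a l ih =>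
    cases l with
    | nil => simp [litConjOf, sat_litOf]
    | cons b l => rw [litConjOf, sat_conj_iff, ih, sat_litOf]; simp

theorem atoms_litConjOf (v : ℕ → Bool) (l : List ℕ) (hl : l ≠ []) :
    (litConjOf v l).atoms = l.toFinset := by
  induction l with
  | nil => exact absurd rfl hl
  | cons a l ih =>
    cases l with
    | nil => simp [litConjOf, atoms_litOf]
    | cons b l =>
      rw [litConjOf, PropForm.conj]
      simp only [PropForm.atoms]
      rw [ih (by simp), atoms_litOf, List.toFinset_cons (a := a), Finset.insert_eq]

theorem isLitConj_litConjOf (v : ℕ → Bool) (l : List ℕ) (hl : l ≠ []) :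
    IsLitConj (litConjOf v l) := by
  induction l with
  | nil => exact absurd rfl hl
  | cons a l ih =>
    cases l with
    | nil => exact IsLitConj.lit (isLiteral_litOf v a)
    | cons b l => exact IsLitConj.conj (IsLitConj.lit (isLiteral_litOf v a)) (ih (by simp))

/-- Complete literal conjunction over `B` describing `U`. -/
def lc (B U : Finset ℕ) : PropForm := litConjOf (valOf U) (B.sort (· ≤ ·))

theorem sort_ne_nil (B : Finset ℕ) (hB : B.Nonempty) : B.sort (· ≤ ·) ≠ [] := by
  intro h
  obtain ⟨x, hx⟩ := hB
  have : x ∈ B.sort (· ≤ ·) := by simpa using hx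
  rw [h] at this
  simp at this

theorem sat_lc (w : ℕ → Bool) (B U : Finset ℕ) :
    PropForm.sat w (lc B U) ↔ ∀ a ∈ B, w a = valOf U a := by
  simp [lc, sat_litConjOf]

theorem sat_lc_restrict (w : ℕ → Bool) (B U : Finset ℕ) (hU : U ⊆ B) :
    PropForm.sat w (lc B U) ↔ U = restrict w B := by
  rw [sat_lc]
  constructor
  · intro h
    ext a
    simp only [restrict, Finset.mem_filter]
    constructor
    · intro ha
      exact ⟨hU ha, by rw [h a (hU ha)]; simp [valOf, ha]⟩
    · rintro ⟨ha, hw⟩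
      rw [h a ha] at hw
      simpa [valOf] using hw
  · rintro rfl a ha
    simp [valOf, restrict, ha]

theorem restrict_valOf (B U : Finset ℕ) (hU : U ⊆ B) : restrict (valOf U) B = U := by
  ext a
  simp only [restrict, Finset.mem_filter, valOf, decide_eq_true_eq]
  exact ⟨fun h => h.2, fun h => ⟨hU h, h⟩⟩

theorem sat_valOf_restrict (w : ℕ → Bool) (B : Finset ℕ) (α : PropForm) (hα : α.atoms ⊆ B) :
    PropForm.sat (valOf (restrict w B)) α ↔ PropForm.sat w α := by
  apply sat_congr_atoms
  intro j hj
  simp [valOf, restrict, hα hj]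

theorem sat_phi_s18 (w : ℕ → Bool) (B U : Finset ℕ) (hU : U ⊆ B) :
    PropForm.sat w (phi B U) ↔ U = restrict w B := by
  rw [← sat_lc_restrict w B U hU, sat_lc, phi, sat_conj_iff, sat_bigConj_iff, sat_bigConj_iff]
  simp only [List.mem_map, Finset.mem_sort, forall_exists_index, and_imp,
    forall_apply_eq_imp_iff₂, PropForm.sat, Finset.mem_sdiff, valOf]
  constructor
  · rintro ⟨h1, h2⟩ a ha
    by_cases hu : a ∈ U
    · simp [hu, h1 a hu]
    · have := h2 _ a ha hu rfl
      simpa [hu, PropForm.sat] using this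
  · intro h
    refine ⟨fun a ha => by simp [h a (hU ha), ha], ?_⟩
    rintro _ a ha hu rfl
    simp [PropForm.sat, h a ha, hu]

theorem atoms_bigConj (l : List PropForm) (s : Finset ℕ)
    (h : ∀ x, x ∈ s ↔ ∃ γ ∈ l, x ∈ γ.atoms) : (bigConj l).atoms = s ∪ {0} := by
  induction l generalizing s with
  | nil =>
    have : s = ∅ := by ext x; simp [h]
    subst this; rfl
  | cons a l ih =>
    have e : bigConj (a :: l) = PropForm.conj a (bigConj l) := rfl
    rw [e]
    simp only [PropForm.conj, PropForm.atoms]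
    classical
    rw [ih (l.toFinset.sup PropForm.atoms) (by simp [Finset.mem_sup])]
    ext x
    simp [h, Finset.mem_sup, or_assoc]

theorem atoms_phi (B U : Finset ℕ) (hU : U ⊆ B) (h0 : 0 ∈ B) : (phi B U).atoms = B := by
  simp only [phi, PropForm.conj, PropForm.atoms]
  rw [atoms_bigConj _ U (by simp [PropForm.atoms]),
    atoms_bigConj _ (B \ U) (by simp [PropForm.atoms])]
  ext x
  simp only [Finset.mem_union, Finset.mem_sdiff, Finset.mem_singleton]
  constructor
  · rintro ((h | rfl) | (h | rfl))
    exacts [hU h, h0, h.1, h0]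
  · intro h
    by_cases hx : x ∈ U <;> simp [hx, h]

open Classical in
/-- The finite sets `U ⊆ B` that satisfy `γ`. -/
noncomputable def modelsIn (B : Finset ℕ) (γ : PropForm) : Finset (Finset ℕ) :=
  B.powerset.filter fun U => PropForm.sat (valOf U) γ

theorem mem_modelsIn (B : Finset ℕ) (γ : PropForm) (U : Finset ℕ) :
    U ∈ modelsIn B γ ↔ U ∈ B.powerset ∧ PropForm.sat (valOf U) γ := by
  simp [modelsIn]

theorem rrside_of {k : ℕ} (B : Finset ℕ) (hne : B.Nonempty) (α : Fin (k + 1) → PropForm)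
    (t : Fin (k + 1) → RTerm) (hB : BigB α = B)
    (H : ∀ ρ : RVar → ℝ, (∀ U ∈ B.powerset, 0 ≤ ρ (RVar.fm (phi B U))) →
      (∑ U ∈ B.powerset, ρ (RVar.fm (phi B U))) = 1 →
      (∀ j, ρ (RVar.fm (α j)) = ∑ U ∈ modelsIn B (α j), ρ (RVar.fm (lc B U))) →
      (∀ j : Fin k, ρ (RVar.fm (α j.castSucc)) = (t j.castSucc).eval ρ) →
      ρ (RVar.fm (α (Fin.last k))) = (t (Fin.last k)).eval ρ) :
    RRside α (fun _ => true) t := by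
  have hsub : ∀ j, (α j).atoms ⊆ B := by
    intro j
    rw [← hB]
    exact Finset.le_sup (f := fun j => (α j).atoms) (Finset.mem_univ j)
  have hmem : ∀ (j) (ℓ : Fin (modelsIn B (α j)).toList.length),
      (modelsIn B (α j)).toList.get ℓ ∈ modelsIn B (α j) := fun j ℓ =>
    Finset.mem_toList.1 (List.get_mem _ _)
  refine ⟨fun j => (modelsIn B (α j)).toList.length,
    fun j ℓ => lc B ((modelsIn B (α j)).toList.get ℓ), ⟨?_, ?_, ?_, ?_⟩, ?_⟩
  · intro j ℓ
    rw [hB, lc, atoms_litConjOf _ _ (sort_ne_nil B hne)]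
    simp
  · intro j ℓ
    exact isLitConj_litConjOf _ _ (sort_ne_nil B hne)
  · intro j ℓ ℓ' hne' v
    have hs : ∀ ℓ, (modelsIn B (α j)).toList.get ℓ ⊆ B := fun ℓ =>
      Finset.mem_powerset.1 ((mem_modelsIn _ _ _).1 (hmem j ℓ)).1
    rw [PropForm.sat, sat_conj_iff, sat_lc_restrict _ _ _ (hs ℓ), sat_lc_restrict _ _ _ (hs ℓ')]
    rintro ⟨h1, h2⟩
    exact hne' ((List.nodup_iff_injective_get.1 (Finset.nodup_toList _)) (h1.trans h2.symm))
  · intro j v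
    have key : PropForm.sat v (α j) ↔ PropForm.sat v (bigDisj (List.ofFn
        fun ℓ => lc B ((modelsIn B (α j)).toList.get ℓ))) := by
      rw [sat_bigDisj_iff]
      constructor
      · intro h
        have hm : restrict v B ∈ (modelsIn B (α j)).toList := by
          rw [Finset.mem_toList, mem_modelsIn, Finset.mem_powerset]
          exact ⟨Finset.filter_subset _ _, (sat_valOf_restrict v B _ (hsub j)).2 h⟩
        obtain ⟨ℓ, hℓ⟩ := List.get_of_mem hm
        refine ⟨_, (List.mem_ofFn).2 ⟨ℓ, rfl⟩, ?_⟩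
        rw [hℓ]
        exact (sat_lc_restrict v B _ (Finset.filter_subset _ _)).2 rfl
      · rintro ⟨γ, hγ, hs⟩
        obtain ⟨ℓ, rfl⟩ := (List.mem_ofFn).1 hγ
        have hm := (mem_modelsIn _ _ _).1 (hmem j ℓ)
        have e := (sat_lc_restrict v B _ (Finset.mem_powerset.1 hm.1)).1 hs
        rw [← sat_valOf_restrict v B _ (hsub j), ← e]
        exact hm.2
    rw [PropForm.biimp, sat_conj_iff]
    exact ⟨key.1, key.2⟩
  · rintro ρ ⟨h1, h2, h3⟩ h4
    rw [hB] at h1 h2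
    simp only [rcmp, if_true] at h4 ⊢
    refine H ρ (fun U hU => (h1 U hU).1) h2 (fun j => ?_) h4
    rw [h3 j]
    have := Finset.sum_map_toList (modelsIn B (α j)) (fun U => ρ (RVar.fm (lc B U)))
    rw [← this, ← List.sum_ofFn]
    congr 1
    apply List.ext_getElem <;> simp

theorem pderiv_pconj {Γ : Set PPLForm} {φ ψ : PPLForm} (h1 : PPLderiv Γ φ) (h2 : PPLderiv Γ ψ) :
    PPLderiv Γ (pconj φ ψ) := by
  refine PPLderiv.mp (PPLderiv.mp (PPLderiv.taut (φ := PPLForm.imp φ (PPLForm.imp ψ (pconj φ ψ)))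
    ?_) h1) h2
  intro w
  simp only [pconj, pneg, PPLForm.evalAtoms]
  cases PPLForm.evalAtoms w φ <;> cases PPLForm.evalAtoms w ψ <;>
    cases PPLForm.evalAtoms w pbot <;> rfl

theorem pderiv_pBigConj {Γ : Set PPLForm} (l : List PPLForm) (hl : l ≠ [])
    (h : ∀ φ ∈ l, PPLderiv Γ φ) : PPLderiv Γ (pBigConj l) := by
  induction l with
  | nil => exact absurd rfl hl
  | cons a l ih =>
    cases l with
    | nil => exact h a (by simp)
    | cons b l =>
      exact pderiv_pconj (h a (by simp)) (ih (by simp) fun φ hφ => h φ (List.mem_cons_of_mem _ hφ))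

theorem pderiv_rr {Γ : Set PPLForm} {k : ℕ} (α : Fin (k + 1) → PropForm)
    (t : Fin (k + 1) → RTerm) (hs : RRside α (fun _ => true) t)
    (h : ∀ j : Fin k, PPLderiv Γ (PPLForm.eq (α j.castSucc) (t j.castSucc))) :
    PPLderiv Γ (PPLForm.eq (α (Fin.last k)) (t (Fin.last k))) := by
  have := PPLderiv.rr (Γ := Γ) α (fun _ => true) t hs
  cases k with
  | zero => exact this
  | succ k =>
    refine PPLderiv.mp this (pderiv_pBigConj _ (by simp) ?_)
    intro φ hφ
    obtain ⟨j, rfl⟩ := (List.mem_ofFn).1 hφ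
    exact h j

/-- Every formula has an adequate DNF over its atoms, so `⟦γ⟧ = x_γ` is an RR axiom. -/
theorem pderiv_var {Γ : Set PPLForm} (γ : PropForm) :
    PPLderiv Γ (PPLForm.eq γ (RTerm.var (RVar.fm γ))) := by
  have hne : ∀ γ : PropForm, γ.atoms.Nonempty := by
    intro γ
    induction γ with
    | atom j => exact ⟨j, by simp [PropForm.atoms]⟩
    | neg a ih => exact ih
    | imp a b iha ihb => exact iha.mono (by simp [PropForm.atoms])
  refine pderiv_rr (k := 0) (fun _ => γ) (fun _ => RTerm.var (RVar.fm γ)) ?_ (fun j => j.elim0)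
  exact rrside_of γ.atoms (hne γ) _ _ (by simp [BigB]) (fun ρ _ _ _ _ => rfl)

theorem pderiv_star_of_entails {Γ : Set PPLForm} (prem : List PropForm) (β : PropForm)
    (hent : ∀ v, (∀ γ ∈ prem, PropForm.sat v γ) → PropForm.sat v β)
    (hd : ∀ γ ∈ prem, PPLderiv Γ (star γ)) : PPLderiv Γ (star β) := by
  set B : Finset ℕ := {0} ∪ (β.atoms ∪ prem.toFinset.sup PropForm.atoms) with hBdef
  have h0 : 0 ∈ B := by simp [B]
  have hβ : β.atoms ⊆ B := by
    intro x hx; simp [B, hx]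
  have hprem : ∀ γ ∈ prem, γ.atoms ⊆ B := by
    intro γ hγ x hx
    simp only [B, Finset.mem_union, Finset.mem_sup]
    exact Or.inr (Or.inr ⟨γ, by simpa using hγ, hx⟩)
  set F : List (PropForm × RTerm) := prem.map (fun γ => (γ, RTerm.one)) ++
    B.powerset.toList.map (fun U => (phi B U, RTerm.var (RVar.fm (phi B U)))) with hF
  have hFatoms : ∀ p ∈ F, p.1.atoms ⊆ B := by
    intro p hp
    simp only [hF, List.mem_append, List.mem_map, Finset.mem_toList, Finset.mem_powerset] at hp
    rcases hp with ⟨γ, hγ, rfl⟩ | ⟨U, hU, rfl⟩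
    · exact hprem γ hγ
    · exact (atoms_phi B U hU h0).le
  have hFder : ∀ p ∈ F, PPLderiv Γ (PPLForm.eq p.1 p.2) := by
    intro p hp
    simp only [hF, List.mem_append, List.mem_map, Finset.mem_toList, Finset.mem_powerset] at hp
    rcases hp with ⟨γ, hγ, rfl⟩ | ⟨U, hU, rfl⟩
    · exact hd γ hγ
    · exact pderiv_var _
  have hFphi : ∀ U ⊆ B, (phi B U, RTerm.var (RVar.fm (phi B U))) ∈ F := by
    intro U hU
    simp only [hF, List.mem_append, List.mem_map, Finset.mem_toList, Finset.mem_powerset]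
    exact Or.inr ⟨U, hU, rfl⟩
  have hFprem : ∀ γ ∈ prem, (γ, RTerm.one) ∈ F := by
    intro γ hγ
    simp only [hF, List.mem_append, List.mem_map]
    exact Or.inl ⟨γ, hγ, rfl⟩
  clear_value F
  let α : Fin (F.length + 1) → PropForm := Fin.snoc (α := fun _ => PropForm) (fun j => (F.get j).1) β
  let t : Fin (F.length + 1) → RTerm := Fin.snoc (α := fun _ => RTerm) (fun j => (F.get j).2) RTerm.one
  have hαc : ∀ j : Fin F.length, α j.castSucc = (F.get j).1 := fun j => by simp [α]
  have htc : ∀ j : Fin F.length, t j.castSucc = (F.get j).2 := fun j => by simp [t]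
  have hαl : α (Fin.last _) = β := by simp [α]
  have htl : t (Fin.last _) = RTerm.one := by simp [t]
  have hBig : BigB α = B := by
    apply le_antisymm
    · apply Finset.sup_le
      intro j _
      refine Fin.lastCases ?_ (fun j => ?_) j
      · rw [hαl]; exact hβ
      · rw [hαc]; exact hFatoms _ (List.get_mem _ _)
    · obtain ⟨j, hj⟩ := List.get_of_mem (hFphi B (Finset.Subset.refl _))
      have := Finset.le_sup (f := fun j => (α j).atoms) (Finset.mem_univ j.castSucc)
      simp only [hαc, hj, atoms_phi B B (Finset.Subset.refl _) h0] at this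
      exact this
  have main := pderiv_rr (Γ := Γ) α t ?_ ?_
  · rw [hαl, htl] at main; exact main
  · refine rrside_of B ⟨0, h0⟩ α t hBig ?_
    intro ρ hnn hsum heq hp
    have heqF : ∀ p ∈ F, ρ (RVar.fm p.1) = ∑ U ∈ modelsIn B p.1, ρ (RVar.fm (lc B U)) := by
      intro p hpF
      obtain ⟨j, rfl⟩ := List.get_of_mem hpF
      have := heq j.castSucc
      rwa [hαc] at this
    have hphi : ∀ U ∈ B.powerset, ρ (RVar.fm (phi B U)) = ρ (RVar.fm (lc B U)) := by
      intro U hU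
      have hU' := Finset.mem_powerset.1 hU
      rw [heqF _ (hFphi U hU')]
      have : modelsIn B (phi B U) = {U} := by
        ext V
        simp only [modelsIn, Finset.mem_filter, Finset.mem_powerset, Finset.mem_singleton]
        constructor
        · rintro ⟨hV, hs⟩
          rw [sat_phi_s18 _ _ _ hU', restrict_valOf B V hV] at hs
          exact hs.symm
        · rintro rfl
          exact ⟨hU', (sat_phi_s18 _ _ _ hU').2 (restrict_valOf B V hU').symm⟩
      rw [this, Finset.sum_singleton]
    have hnn' : ∀ U ∈ B.powerset, 0 ≤ ρ (RVar.fm (lc B U)) := fun U hU => hphi U hU ▸ hnn U hU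
    rw [Finset.sum_congr rfl hphi] at hsum
    have hzero : ∀ γ ∈ prem, ∀ U ∈ B.powerset, ¬ PropForm.sat (valOf U) γ →
        ρ (RVar.fm (lc B U)) = 0 := by
      classical
      intro γ hγ U hU hns
      have e1 := heqF _ (hFprem γ hγ)
      have e2 : ρ (RVar.fm γ) = 1 := by
        obtain ⟨j, hj⟩ := List.get_of_mem (hFprem γ hγ)
        have := hp j
        rw [hαc, htc, hj] at this
        exact this
      have e3 := Finset.sum_filter_add_sum_filter_not B.powerset
        (fun U => PropForm.sat (valOf U) γ) (fun U => ρ (RVar.fm (lc B U)))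
      have e4 : ∑ U ∈ B.powerset.filter (fun U => ¬ PropForm.sat (valOf U) γ),
          ρ (RVar.fm (lc B U)) = 0 := by
        have e5 : ∑ U ∈ B.powerset.filter (fun U => PropForm.sat (valOf U) γ),
          ρ (RVar.fm (lc B U)) = 1 := by
          rw [← e2, e1]
          unfold modelsIn
          congr!
        linarith
      exact (Finset.sum_eq_zero_iff_of_nonneg
        (fun V hV => hnn' V (Finset.mem_filter.1 hV).1)).1 e4 U (Finset.mem_filter.2 ⟨hU, hns⟩)
    have hl := heq (Fin.last _)
    rw [hαl] at hl
    rw [hαl, htl, hl]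
    change _ = (1 : ℝ)
    rw [← hsum]
    apply Finset.sum_subset (fun V hV => ((mem_modelsIn _ _ _).1 hV).1)
    intro U hU hnot
    have hns : ¬ PropForm.sat (valOf U) β := fun h =>
      hnot ((mem_modelsIn _ _ _).2 ⟨hU, h⟩)
    have : ¬ ∀ γ ∈ prem, PropForm.sat (valOf U) γ := fun h => hns (hent _ h)
    push Not at this
    obtain ⟨γ, hγ, hs⟩ := this
    exact hzero γ hγ U hU hs
  · intro j
    rw [hαc, htc]
    exact hFder _ (List.get_mem _ _)

/-- if `Δ ⊢_c α` then `Δ* ⊢ α*` in the PPL calculus. -/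
theorem cpl_deriv_to_ppl (Δ : Set PropForm) (α : PropForm) (h : CPLderiv Δ α) :
    PPLderiv (star '' Δ) (star α) := by
  induction h with
  | hyp h => exact PPLderiv.hyp ⟨_, h, rfl⟩
  | taut h => exact pderiv_star_of_entails [] _ (fun v _ => h v) (by simp)
  | @mp α β _ _ ih1 ih2 =>
    refine pderiv_star_of_entails [PropForm.imp α β, α] _ (fun v hv => ?_) ?_
    · have h1 := hv (PropForm.imp α β) (by simp)
      have h2 := hv α (by simp)
      exact h1 h2
    · simp [ih1, ih2]
end
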